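/- Let V = RS[F_q, D, d] be the Reed-Solomon code of evaluations on D ⊆ F_q of polynomials of degree < d. For z, b ∈ F_q, let V_{z,b} = {Q|_D : deg(Q) < d, Q(z) = b}. Let L*_δ be the maximum over u of |List(u, V, δ)|. Let u, u* ∈ F_q^D, and for each z let B_z(X) ∈ F_q[X] be a linear (degree ≤ 1) polynomial. Suppose for some 0 < ε < 1/3: Pr_{x,z ∈ F_q}[Δ(u* + x·u, V_{z, B_z(x)}) < δ] ≥ max(2·L*_δ·(d/q + ε)^{1/3}, 4/(ε²q)). Then there exist v, v* ∈ V and C ⊆ D with |C| ≥ (1-δ-ε)|D| such that u agrees with v on C and u* agrees with v* on C; consequently Δ(u, V) ≤ δ + ε and Δ(u*, V) ≤ δ + ε. -/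

import Mathlib

open Finset Polynomial
open scoped Classical

/-- Relative Hamming distance between two functions on a finite domain. -/
noncomputable def relDist {D F : Type*} [Fintype D] (u v : D → F) : ℝ :=
  ((Finset.univ.filter (fun i => u i ≠ v i)).card : ℝ) / (Fintype.card D)

/-!
Call a pair `(x, z)` good when some codeword `Q` in the list of `u* + x u` has `Q z = B_z x`. By
pigeonhole every `x` has a codeword `P_x` that accounts for a `1 / L*` fraction of the good pairs on
its fibre; let `G_x` be the set of those `z`. Double counting and the power mean inequality show
that the triple intersections `G_{x₁} ∩ G_{x₂} ∩ G_{x₃}` have more than `d` points on average, so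
for some `x₁ ≠ x₂` this happens for more than `ε q` values of `x₃`. At each of these points the
values of `P_{x₁}, P_{x₂}, P_{x₃}` lie on the line `B_z`, and since a polynomial of degree `< d` is
determined by `d` values, `P_{x₃}` lies on the line through `P_{x₁}` and `P_{x₂}`. Thus
`P_x = v* + x v` for many `x`, and two lines that meet twice coincide, so at all but a `δ + ε`
fraction of the points `y ∈ D` the lines `u*(y) + x u(y)` and `v*(y) + x v(y)` are equal.
-/

section DoubleCounting

variable {ι α β : Type*} [Fintype ι]

theorem sum_sum_inter_eq_sum_card_mul (G : ι → Finset α) (A : Finset α) (f : α → ℕ) :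
    ∑ x, ∑ z ∈ A ∩ G x, f z = ∑ z ∈ A, #{x | z ∈ G x} * f z := by
  rw [sum_comm' (t' := A) (s' := fun z => {x | z ∈ G x}) (by simp [and_comm])]
  simp only [sum_const, smul_eq_mul]

variable [Fintype α]

theorem ncard_setOf_prod_eq_sum (R : ι → α → Prop) :
    {p : ι × α | R p.1 p.2}.ncard = ∑ x, #{z | R x z} := by
  rw [Set.ncard_eq_toFinset_card', Set.toFinset_ofPred]
  simp only [card_filter, ← univ_product_univ, sum_product]

theorem exists_card_filter_exists_le_ncard_mul [Nonempty β] {Λ : Set β} (hΛ : Λ.Finite)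
    (R : β → α → Prop) :
    ∃ b, #{z | ∃ c ∈ Λ, R c z} ≤ Λ.ncard * #{z | b ∈ Λ ∧ R b z} := by
  lift Λ to Finset β using hΛ
  simp only [mem_coe, Set.ncard_coe_finset]
  obtain rfl | hne := Λ.eq_empty_or_nonempty
  · exact ⟨Classical.arbitrary β, by simp⟩
  obtain ⟨b, hb, hmax⟩ := exists_max_image Λ (fun c => #{z | R c z}) hne
  have hcover : ({z | ∃ c ∈ Λ, R c z} : Finset α) = Λ.biUnion fun c => {z | R c z} := by
    ext z
    simp
  refine ⟨b, ?_⟩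
  simp only [hb, true_and, hcover]
  exact card_biUnion_le_card_mul _ _ _ hmax

theorem exists_ncard_le_mul_sum_card [Nonempty β] {Λ : ι → Set β} (hΛ : ∀ x, (Λ x).Finite)
    {L : ℝ} (hL : ∀ x, ((Λ x).ncard : ℝ) ≤ L) (R : ι → β → α → Prop) :
    ∃ P : ι → β, ({p : ι × α | ∃ b ∈ Λ p.1, R p.1 b p.2}.ncard : ℝ) ≤
      L * ∑ x, #{z | P x ∈ Λ x ∧ R x (P x) z} := by
  choose P hP using fun x => exists_card_filter_exists_le_ncard_mul (hΛ x) (R x)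
  refine ⟨P, ?_⟩
  rw [ncard_setOf_prod_eq_sum fun x z => ∃ b ∈ Λ x, R x b z]
  push_cast
  rw [mul_sum]
  gcongr with x
  calc (#{z | ∃ b ∈ Λ x, R x b z} : ℝ)
      ≤ (Λ x).ncard * #{z | P x ∈ Λ x ∧ R x (P x) z} := mod_cast hP x
    _ ≤ L * #{z | P x ∈ Λ x ∧ R x (P x) z} := by gcongr; exact hL x

theorem sum_card_eq_sum_card_filter_mem (G : ι → Finset α) :
    ∑ x, #(G x) = ∑ z, #{x | z ∈ G x} := by
  simpa using sum_sum_inter_eq_sum_card_mul G univ 1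

theorem sum_card_inter_inter_eq_sum_pow_three (G : ι → Finset α) :
    ∑ x₁, ∑ x₂, ∑ x₃, #(G x₁ ∩ G x₂ ∩ G x₃) = ∑ z, #{x | z ∈ G x} ^ 3 := by
  calc ∑ x₁, ∑ x₂, ∑ x₃, #(G x₁ ∩ G x₂ ∩ G x₃)
      = ∑ x₁, ∑ x₂, ∑ z ∈ G x₁ ∩ G x₂, #{x | z ∈ G x} := by
        simp only [card_eq_sum_ones (_ ∩ _), sum_sum_inter_eq_sum_card_mul, mul_one]
    _ = ∑ x₁, ∑ z ∈ univ ∩ G x₁, #{x | z ∈ G x} * #{x | z ∈ G x} := by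
        simp only [sum_sum_inter_eq_sum_card_mul, univ_inter]
    _ = ∑ z, #{x | z ∈ G x} ^ 3 := by
        simp only [sum_sum_inter_eq_sum_card_mul, pow_three]

theorem sum_pow_three_le_card_sq_mul (f : α → ℕ) :
    (∑ z, f z) ^ 3 ≤ Fintype.card α ^ 2 * ∑ z, f z ^ 3 := by
  obtain hα | hα := isEmpty_or_nonempty α
  · simp
  have hmean := pow_sum_div_card_le_sum_pow (s := univ) (f := fun z => (f z : ℝ))
    (fun z _ => Nat.cast_nonneg (f z)) 2
  rw [card_univ, div_le_iff₀' (by positivity)] at hmean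
  exact_mod_cast hmean

theorem sum_le_card_mul_add_mul_card_filter_lt {f : ι → ℕ} {m : ℕ} (hf : ∀ x, f x ≤ m) (k : ℕ) :
    ∑ x, f x ≤ Fintype.card ι * k + m * #{x | k < f x} := by
  calc ∑ x, f x ≤ ∑ x, (k + if k < f x then m else 0) := by
        gcongr with x
        have := hf x
        split_ifs <;> omega
    _ = Fintype.card ι * k + m * #{x | k < f x} := by
        simp only [sum_add_distrib, sum_const, card_univ, smul_eq_mul, ← sum_filter, mul_comm]

theorem exists_ne_lt_of_lt_sum {f : ι → ι → ℕ} {a b : ℕ} (ha : ∀ x, f x x ≤ a)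
    (h : Fintype.card ι * a + Fintype.card ι ^ 2 * b < ∑ x, ∑ y, f x y) :
    ∃ x y, x ≠ y ∧ b < f x y := by
  by_contra! hb
  have hpoint (x y : ι) : f x y ≤ (if x = y then a else 0) + b := by
    split_ifs with hxy
    · subst hxy
      exact (ha x).trans (Nat.le_add_right a b)
    · simpa using hb x y hxy
  refine h.not_ge ?_
  calc ∑ x, ∑ y, f x y ≤ ∑ x : ι, ∑ y : ι, ((if x = y then a else 0) + b) := by
        gcongr with x _ y
        exact hpoint x y
    _ = Fintype.card ι * a + Fintype.card ι ^ 2 * b := by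
        simp only [sum_add_distrib, sum_ite_eq, mem_univ, if_true, sum_const, card_univ,
          smul_eq_mul]
        ring

theorem exists_ne_lt_card_filter_lt_card_inter (G : ι → Finset α) {k s : ℕ}
    (h : Fintype.card ι ^ 2 * Fintype.card α ^ 2 *
      (Fintype.card α + Fintype.card ι * k + Fintype.card α * s) < (∑ x, #(G x)) ^ 3) :
    ∃ x₁ x₂, x₁ ≠ x₂ ∧ s < #{x₃ | k < #(G x₁ ∩ G x₂ ∩ G x₃)} := by
  set n := Fintype.card ι
  set m := Fintype.card α
  have hsum : n ^ 2 * (m + n * k + m * s) < ∑ x₁, ∑ x₂, ∑ x₃, #(G x₁ ∩ G x₂ ∩ G x₃) := by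
    refine lt_of_mul_lt_mul_left ?_ (Nat.zero_le (m ^ 2))
    calc m ^ 2 * (n ^ 2 * (m + n * k + m * s))
        = n ^ 2 * m ^ 2 * (m + n * k + m * s) := by ring
      _ < (∑ z, #{x | z ∈ G x}) ^ 3 := by rwa [← sum_card_eq_sum_card_filter_mem]
      _ ≤ m ^ 2 * ∑ x₁, ∑ x₂, ∑ x₃, #(G x₁ ∩ G x₂ ∩ G x₃) := by
        rw [sum_card_inter_inter_eq_sum_pow_three]
        exact sum_pow_three_le_card_sq_mul _
  have hdiag (x : ι) : ∑ x₃, #(G x ∩ G x ∩ G x₃) ≤ n * m :=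
    sum_le_card_nsmul _ _ _ fun _ _ => card_le_univ _
  obtain ⟨x₁, x₂, hne, hlt⟩ :=
    exists_ne_lt_of_lt_sum (b := n * k + m * s) hdiag (hsum.trans_eq' (by ring))
  have hsplit := sum_le_card_mul_add_mul_card_filter_lt
    (fun x₃ => card_le_univ (G x₁ ∩ G x₂ ∩ G x₃)) k
  exact ⟨x₁, x₂, hne, lt_of_mul_lt_mul_left
    (Nat.lt_of_add_lt_add_left (hlt.trans_le hsplit)) (Nat.zero_le m)⟩

end DoubleCounting

section Agreement

variable {ι M : Type*} [Fintype ι]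

theorem card_mul_relDist (u v : ι → M) : Fintype.card ι * relDist u v = hammingDist u v := by
  obtain hι | hι := isEmpty_or_nonempty ι
  · simp [hammingDist]
  · rw [relDist, mul_div_cancel₀ _ (by positivity)]
    simp [hammingDist]

theorem relDist_le_of_forall_mem_eq [Nonempty ι] {u v : ι → M} {η : ℝ} {A : Finset ι}
    (hA : (1 - η) * Fintype.card ι ≤ #A) (h : ∀ y ∈ A, u y = v y) : relDist u v ≤ η := by
  have hdisj : hammingDist u v + #A ≤ Fintype.card ι := by
    rw [hammingDist, ← card_compl_add_card A]
    gcongr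
    intro y hy
    simp only [mem_filter_univ] at hy
    exact mem_compl.2 fun hyA => hy (h y hyA)
  have hdisj' : (hammingDist u v + #A : ℝ) ≤ Fintype.card ι := mod_cast hdisj
  have hι : (0 : ℝ) < Fintype.card ι := by positivity
  refine le_of_mul_le_mul_left ?_ hι
  rw [card_mul_relDist]
  linarith

variable {R : Type*} [Ring R] [IsDomain R] [AddCommGroup M] [Module R M] [Module.IsTorsionFree R M]

theorem card_filter_add_smul_eq_le_one {a a' b b' : M} (h : ¬(a = b ∧ a' = b')) (S : Finset R) :
    #{x ∈ S | a' + x • a = b' + x • b} ≤ 1 := by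
  rw [card_le_one]
  intro x hx y hy
  obtain ⟨-, hx⟩ := mem_filter.1 hx
  obtain ⟨-, hy⟩ := mem_filter.1 hy
  by_contra hxy
  have hsmul : (x - y) • a = (x - y) • b := by
    rw [sub_smul, sub_smul, ← add_sub_add_left_eq_sub _ _ a', hx, hy, add_sub_add_left_eq_sub]
  obtain rfl := smul_right_injective M (sub_ne_zero.2 hxy) hsmul
  exact h ⟨rfl, add_right_cancel hx⟩

theorem card_mul_card_le_sum_hammingDist_add (u u' v v' : ι → M) (S : Finset R) :
    #{y | ¬(u y = v y ∧ u' y = v' y)} * #S ≤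
      ∑ x ∈ S, hammingDist (u' + x • u) (v' + x • v) + #{y | ¬(u y = v y ∧ u' y = v' y)} := by
  set T : Finset ι := {y | ¬(u y = v y ∧ u' y = v' y)}
  have hpoint : ∀ y ∈ T, #S ≤ #{x ∈ S | u' y + x • u y ≠ v' y + x • v y} + 1 := by
    intro y hy
    have hle := card_filter_add_smul_eq_le_one (mem_filter.1 hy).2 S
    have hsplit : #{x ∈ S | u' y + x • u y = v' y + x • v y} +
        #{x ∈ S | u' y + x • u y ≠ v' y + x • v y} = #S := card_filter_add_card_filter_not _
    omega
  calc #T * #S ≤ ∑ y ∈ T, (#{x ∈ S | u' y + x • u y ≠ v' y + x • v y} + 1) :=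
        card_nsmul_le_sum _ _ _ hpoint
    _ = ∑ y ∈ T, #{x ∈ S | u' y + x • u y ≠ v' y + x • v y} + #T := by
        rw [sum_add_distrib, card_eq_sum_ones T]
    _ ≤ ∑ y, #{x ∈ S | u' y + x • u y ≠ v' y + x • v y} + #T := by
        gcongr
        exact subset_univ T
    _ = ∑ x ∈ S, hammingDist (u' + x • u) (v' + x • v) + #T := by
        congr 1
        exact (sum_card_bipartiteAbove_eq_sum_card_bipartiteBelow
          fun x y => u' y + x • u y ≠ v' y + x • v y).symm

theorem mul_card_le_card_filter_eq_and_eq {δ ε : ℝ} {u u' v v' : ι → M} {S : Finset R}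
    (hS : 1 ≤ ε * #S) (h : ∀ x ∈ S, relDist (u' + x • u) (v' + x • v) < δ) :
    (1 - (δ + ε)) * Fintype.card ι ≤ #{y | u y = v y ∧ u' y = v' y} := by
  set n := Fintype.card ι
  set T : Finset ι := {y | ¬(u y = v y ∧ u' y = v' y)}
  have hcompl : (#{y | u y = v y ∧ u' y = v' y} + #T : ℝ) = n :=
    mod_cast card_filter_add_card_filter_not _
  have hS₀ : (0 : ℝ) < #S := by
    by_contra! hS₀
    norm_num [hS₀.antisymm (Nat.cast_nonneg _)] at hS
  have hdist : (∑ x ∈ S, hammingDist (u' + x • u) (v' + x • v) : ℝ) ≤ #S * (n * δ) := by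
    rw [← nsmul_eq_mul]
    refine sum_le_card_nsmul _ _ _ fun x hx => ?_
    rw [← card_mul_relDist]
    gcongr
    exact (h x hx).le
  have hcount : (#T * #S : ℝ) ≤
      ∑ x ∈ S, (hammingDist (u' + x • u) (v' + x • v) : ℝ) + #T :=
    mod_cast card_mul_card_le_sum_hammingDist_add u u' v v' S
  have hT : (#T : ℝ) ≤ (δ + ε) * n := by
    refine le_of_mul_le_mul_right ?_ hS₀
    calc (#T * #S : ℝ) ≤ #S * (n * δ) + #T := by linarith
      _ ≤ #S * (n * δ) + n * 1 := by
        rw [mul_one]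
        gcongr
        exact card_le_univ T
      _ ≤ #S * (n * δ) + n * (ε * #S) := by gcongr
      _ = (δ + ε) * n * #S := by ring
  linarith

end Agreement

section Secant

variable {F : Type*} [Field F]

theorem eval_add_mul_slope_of_degree_le_one {p : F[X]} (hp : p.degree ≤ 1) {a b : F} (hab : a ≠ b)
    (x : F) : p.eval a + (x - a) * slope (fun t => p.eval t) a b = p.eval x := by
  have hba : b - a ≠ 0 := sub_ne_zero.2 hab.symm
  rw [eq_X_add_C_of_degree_le_one hp, slope_def_field]
  simp only [eval_add, eval_mul, eval_C, eval_X]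
  field_simp
  ring

theorem eq_add_smul_slope_of_le_card {d : ℕ} {P : F → F[X]} {B : F → F[X]}
    (hB : ∀ z, (B z).degree ≤ 1) {x₁ x₂ x₃ : F} (hne : x₁ ≠ x₂) {s : Finset F} (hs : d ≤ #s)
    (hdeg : ∀ x ∈ ({x₁, x₂, x₃} : Set F), P x ∈ degreeLT F d)
    (heval : ∀ x ∈ ({x₁, x₂, x₃} : Set F), ∀ z ∈ s, (P x).eval z = (B z).eval x) :
    P x₃ = P x₁ + (x₃ - x₁) • slope P x₁ x₂ := by
  simp only [Set.mem_insert_iff, Set.mem_singleton_iff, forall_eq_or_imp, forall_eq] at hdeg heval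
  obtain ⟨hP₁, hP₂, hP₃⟩ := hdeg
  obtain ⟨hB₁, hB₂, hB₃⟩ := heval
  have hslope : slope P x₁ x₂ ∈ degreeLT F d :=
    Submodule.smul_mem _ _ (Submodule.sub_mem _ hP₂ hP₁)
  have hsecant : P x₁ + (x₃ - x₁) • slope P x₁ x₂ ∈ degreeLT F d :=
    Submodule.add_mem _ hP₁ (Submodule.smul_mem _ _ hslope)
  have hds : (d : WithBot ℕ) ≤ #s := mod_cast hs
  refine eq_of_degrees_lt_of_eval_finset_eq s ((mem_degreeLT.1 hP₃).trans_le hds)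
    ((mem_degreeLT.1 hsecant).trans_le hds) fun z hz => ?_
  have heval_slope : (slope P x₁ x₂).eval z = slope (fun t => (B z).eval t) x₁ x₂ := by
    simp [slope_def_module, hB₁ z hz, hB₂ z hz]
  rw [hB₃ z hz, eval_add, eval_smul, smul_eq_mul, hB₁ z hz, heval_slope,
    eval_add_mul_slope_of_degree_le_one (hB z) hne]

theorem exists_line_of_lt_sum_card_pow_three [Fintype F] {d s : ℕ} {P : F → F[X]} {B : F → F[X]}
    (hB : ∀ z, (B z).degree ≤ 1) {G : F → Finset F}
    (hG : ∀ x, ∀ z ∈ G x, P x ∈ degreeLT F d ∧ (P x).eval z = (B z).eval x)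
    (h : Fintype.card F ^ 5 * (1 + d + s) < (∑ x, #(G x)) ^ 3) :
    ∃ Q ∈ degreeLT F d, ∃ Q' ∈ degreeLT F d, ∃ S : Finset F, s < #S ∧
      ∀ x ∈ S, (G x).Nonempty ∧ P x = Q' + x • Q := by
  obtain ⟨x₁, x₂, hne, hcard⟩ := exists_ne_lt_card_filter_lt_card_inter G (k := d) (s := s)
    (h.trans_eq' (by ring))
  set S : Finset F := {x₃ | d < #(G x₁ ∩ G x₂ ∩ G x₃)}
  have hpoint {x z : F} (hz : z ∈ G x₁ ∩ G x₂ ∩ G x) :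
      ∀ t ∈ ({x₁, x₂, x} : Set F), z ∈ G t := by
    simp only [mem_inter] at hz
    simp [hz]
  have hnonempty {x : F} (hx : x ∈ S) : (G x₁ ∩ G x₂ ∩ G x).Nonempty :=
    card_pos.1 (Nat.zero_lt_of_lt (mem_filter.1 hx).2)
  have hdeg {x : F} (hx : x ∈ S) : ∀ t ∈ ({x₁, x₂, x} : Set F), P t ∈ degreeLT F d := by
    obtain ⟨z, hz⟩ := hnonempty hx
    exact fun t ht => (hG t z (hpoint hz t ht)).1
  obtain ⟨x₀, hx₀⟩ := card_pos.1 (Nat.zero_lt_of_lt hcard)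
  have hP₁ := hdeg hx₀ x₁ (by simp)
  have hP₂ := hdeg hx₀ x₂ (by simp)
  have hslope : slope P x₁ x₂ ∈ degreeLT F d :=
    Submodule.smul_mem _ _ (Submodule.sub_mem _ hP₂ hP₁)
  refine ⟨_, hslope, P x₁ - x₁ • slope P x₁ x₂,
    Submodule.sub_mem _ hP₁ (Submodule.smul_mem _ _ hslope), S, hcard, fun x hx => ⟨?_, ?_⟩⟩
  · exact (hnonempty hx).mono inter_subset_right
  · rw [eq_add_smul_slope_of_le_card hB hne (mem_filter.1 hx).2.le (hdeg hx)
      fun t ht z hz => (hG t z (hpoint hz t ht)).2, sub_smul]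
    abel

end Secant

section Threshold

theorem mul_add_lt_pow_three_of_two_mul_rpow_le {q d ε N : ℝ} (hq : 0 < q) (hd : 1 ≤ d)
    (hε : 0 < ε) (hN : 2 * (d / q + ε) ^ ((1 : ℝ) / 3) * q ^ 2 ≤ N) :
    q ^ 5 * (1 + d + ε * q) < N ^ 3 := by
  set t := (d / q + ε) ^ ((1 : ℝ) / 3)
  have ht : t ^ 3 = d / q + ε := by
    rw [← Real.rpow_natCast, ← Real.rpow_mul (by positivity)]
    norm_num
  have hεq : 0 < ε * q := by positivity
  calc q ^ 5 * (1 + d + ε * q) < q ^ 5 * (8 * (d + ε * q)) := by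
        gcongr
        linarith
    _ = (2 * t * q ^ 2) ^ 3 := by
        rw [mul_pow, mul_pow, ht]
        field_simp
        ring
    _ ≤ N ^ 3 := by gcongr

theorem four_le_sq_mul_of_div_le {q ε M : ℝ} (hq : 0 < q) (hε : 0 < ε) (hMq : M ≤ q ^ 2)
    (h : 4 / (ε ^ 2 * q) ≤ M / q ^ 2) : 4 ≤ ε ^ 2 * q := by
  have hprob : M / q ^ 2 ≤ 1 := div_le_one_of_le₀ hMq (by positivity)
  exact (div_le_one (by positivity)).1 (h.trans hprob)

theorem mul_add_lt_pow_three_of_max_le {q d ε L M N : ℝ} (hq : 0 < q) (hd : 1 ≤ d) (hε : 0 < ε)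
    (hN : 0 ≤ N) (hMN : M ≤ L * N)
    (h : max (2 * L * (d / q + ε) ^ ((1 : ℝ) / 3)) (4 / (ε ^ 2 * q)) ≤ M / q ^ 2) :
    q ^ 5 * (1 + d + ε * q) < N ^ 3 := by
  obtain ⟨hroot, hinv⟩ := max_le_iff.1 h
  have hM : 0 < M := by
    refine (div_pos_iff_of_pos_right (show 0 < q ^ 2 by positivity)).1 (hinv.trans_lt' ?_)
    positivity
  have hL : 0 < L := pos_of_mul_pos_left (hM.trans_le hMN) hN
  refine mul_add_lt_pow_three_of_two_mul_rpow_le hq hd hε (le_of_mul_le_mul_left ?_ hL)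
  rw [le_div_iff₀ (by positivity)] at hroot
  linarith

end Threshold

section ReedSolomon

variable {F : Type*} [Field F] {D : Finset F} {d : ℕ} {δ ε : ℝ} {u u' : D → F}

/-- The Reed–Solomon encoding of a polynomial: the word of its values on the evaluation domain
`D`. -/
def rsEncode (D : Finset F) (Q : F[X]) : D → F := fun y => Q.eval (y : F)

/-- The list of Reed–Solomon codewords at relative distance less than `δ` from the word `w`. It
consists of the polynomials rather than of their encodings, since the DEEP method also evaluates
them outside `D`. -/
def rsList (D : Finset F) (d : ℕ) (δ : ℝ) (w : D → F) : Set F[X] :=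
  {Q | Q.degree < d ∧ relDist w (rsEncode D Q) < δ}

/-- The event of the DEEP theorem: the pairs `(x, z)` such that `u' + x • u` has relative distance
less than `δ` from the code `V_{z, B_z(x)}` of the polynomials with value `B_z(x)` at `z`. -/
def deepEvent (D : Finset F) (d : ℕ) (δ : ℝ) (u u' : D → F) (B : F → F[X]) : Set (F × F) :=
  {p | ∃ Q : F[X], Q.degree < d ∧ Q.eval p.2 = (B p.2).eval p.1 ∧
    relDist (u' + p.1 • u) (rsEncode D Q) < δ}

/-- Correlated agreement of two words with the Reed–Solomon code: both agree with codewords on one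
common set, which misses at most an `η` fraction of `D`. -/
def CorrelatedAgreement (D : Finset F) (d : ℕ) (η : ℝ) (u u' : D → F) : Prop :=
  ∃ Q Q' : F[X], Q.degree < d ∧ Q'.degree < d ∧ ∃ C : Finset D, (1 - η) * #D ≤ #C ∧
    (∀ y ∈ C, u y = Q.eval (y : F)) ∧ ∀ y ∈ C, u' y = Q'.eval (y : F)

theorem injOn_rsEncode_rsList (hdD : d ≤ #D) (w : D → F) :
    Set.InjOn (rsEncode D) (rsList D d δ w) := by
  intro Q hQ Q' hQ' h
  have hd : (d : WithBot ℕ) ≤ #D := mod_cast hdD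
  exact eq_of_degrees_lt_of_eval_finset_eq D (hQ.1.trans_le hd) (hQ'.1.trans_le hd)
    fun y hy => congrFun h ⟨y, hy⟩

theorem rsEncode_image_rsList (w : D → F) :
    rsEncode D '' rsList D d δ w =
      {v | (∃ Q : F[X], Q.degree < d ∧ ∀ y : D, v y = Q.eval (y : F)) ∧ relDist w v < δ} := by
  ext v
  constructor
  · rintro ⟨Q, ⟨hQ, hdist⟩, rfl⟩
    exact ⟨⟨Q, hQ, fun _ => rfl⟩, hdist⟩
  · rintro ⟨⟨Q, hQ, hv⟩, hdist⟩
    obtain rfl : v = rsEncode D Q := funext hv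
    exact ⟨Q, ⟨hQ, hdist⟩, rfl⟩

theorem finite_rsList [Finite F] (w : D → F) : (rsList D d δ w).Finite := by
  have hdeg : Finite (degreeLT F d) := Finite.of_equiv _ (degreeLTEquiv F d).symm.toEquiv
  exact (Set.toFinite (degreeLT F d : Set F[X])).subset fun Q hQ => mem_degreeLT.2 hQ.1

theorem deepEvent_eq (B : F → F[X]) :
    deepEvent D d δ u u' B =
      {p | ∃ Q ∈ rsList D d δ (u' + p.1 • u), Q.eval p.2 = (B p.2).eval p.1} := by
  ext p
  simp only [deepEvent, rsList, Set.mem_ofPred_eq, and_assoc, and_comm (a := eval _ _ = _)]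

theorem ncard_deepEvent_le_sq [Fintype F] (B : F → F[X]) :
    (deepEvent D d δ u u' B).ncard ≤ Fintype.card F ^ 2 := by
  rw [sq, ← Fintype.card_prod, ← Nat.card_eq_fintype_card]
  exact Set.ncard_le_card _

theorem exists_degree_lt_eval_eq (hDd : #D ≤ d) (w : D → F) :
    ∃ Q : F[X], Q.degree < d ∧ ∀ y : D, w y = Q.eval (y : F) := by
  have hinj : Set.InjOn (fun y : D => (y : F)) (univ : Finset D) :=
    Subtype.val_injective.injOn
  refine ⟨Lagrange.interpolate univ (fun y : D => (y : F)) w, ?_, fun y => ?_⟩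
  · refine (Lagrange.degree_interpolate_lt w hinj).trans_le ?_
    simpa using hDd
  · exact (Lagrange.eval_interpolate_at_node w hinj (mem_univ y)).symm

theorem correlatedAgreement_of_card_le (hDd : #D ≤ d) {η : ℝ} (hη : 0 ≤ η) (u u' : D → F) :
    CorrelatedAgreement D d η u u' := by
  obtain ⟨Q, hQ, hu⟩ := exists_degree_lt_eval_eq hDd u
  obtain ⟨Q', hQ', hu'⟩ := exists_degree_lt_eval_eq hDd u'
  refine ⟨Q, Q', hQ, hQ', univ, ?_, fun y _ => hu y, fun y _ => hu' y⟩
  rw [card_univ, Fintype.card_coe]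
  exact mul_le_of_le_one_left (Nat.cast_nonneg _) (sub_le_self 1 hη)

theorem correlatedAgreement_of_forall_mem_relDist_lt {Q Q' : F[X]} (hQ : Q ∈ degreeLT F d)
    (hQ' : Q' ∈ degreeLT F d) {S : Finset F} (hS : 1 ≤ ε * #S)
    (h : ∀ x ∈ S, relDist (u' + x • u) (rsEncode D (Q' + x • Q)) < δ) :
    CorrelatedAgreement D d (δ + ε) u u' := by
  have hlin (x : F) : rsEncode D (Q' + x • Q) = rsEncode D Q' + x • rsEncode D Q := by
    ext y
    simp [rsEncode]
  simp only [hlin] at h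
  have hcard := mul_card_le_card_filter_eq_and_eq hS h
  rw [Fintype.card_coe] at hcard
  exact ⟨Q, Q', mem_degreeLT.1 hQ, mem_degreeLT.1 hQ', _, hcard,
    fun y hy => (mem_filter.1 hy).2.1, fun y hy => (mem_filter.1 hy).2.2⟩

theorem correlatedAgreement_of_lt_sum_card_pow_three [Fintype F] {B : F → F[X]}
    (hB : ∀ z, (B z).degree ≤ 1) {P : F → F[X]} {s : ℕ} (hs : 1 ≤ ε * (s + 1))
    (h : Fintype.card F ^ 5 * (1 + d + s) <
      (∑ x, #{z | P x ∈ rsList D d δ (u' + x • u) ∧ (P x).eval z = (B z).eval x}) ^ 3) :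
    CorrelatedAgreement D d (δ + ε) u u' := by
  obtain ⟨Q, hQ, Q', hQ', S, hS, hline⟩ := exists_line_of_lt_sum_card_pow_three hB
    (fun x z hz => (mem_filter.1 hz).2.imp_left fun hP => mem_degreeLT.2 hP.1) h
  have hε : 0 ≤ ε := by
    by_contra! hε
    nlinarith [(Nat.cast_nonneg s : (0 : ℝ) ≤ s)]
  have hS' : 1 ≤ ε * #S := hs.trans (by gcongr; exact_mod_cast hS)
  refine correlatedAgreement_of_forall_mem_relDist_lt hQ hQ' hS' fun x hx => ?_
  obtain ⟨⟨z, hz⟩, hPx⟩ := hline x hx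
  rw [← hPx]
  exact (mem_filter.1 hz).2.1.2

theorem correlatedAgreement_of_prob_deepEvent [Fintype F] (hd : 0 < d) (hε : 0 < ε) {L : ℝ}
    (hL : ∀ x : F, ((rsList D d δ (u' + x • u)).ncard : ℝ) ≤ L) {B : F → F[X]}
    (hB : ∀ z, (B z).degree ≤ 1)
    (hpr : max (2 * L * ((d / Fintype.card F : ℝ) + ε) ^ ((1 : ℝ) / 3))
        (4 / (ε ^ 2 * Fintype.card F))
      ≤ ((deepEvent D d δ u u' B).ncard : ℝ) / (Fintype.card F : ℝ) ^ 2) :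
    CorrelatedAgreement D d (δ + ε) u u' := by
  obtain ⟨P, hP⟩ := exists_ncard_le_mul_sum_card (fun _ => finite_rsList _) hL
    fun x Q z => Q.eval z = (B z).eval x
  rw [← deepEvent_eq] at hP
  set q := Fintype.card F
  set N := ∑ x, #{z | P x ∈ rsList D d δ (u' + x • u) ∧ (P x).eval z = (B z).eval x}
  have hq : (0 : ℝ) < q := mod_cast Fintype.card_pos
  have hεq : 4 ≤ ε ^ 2 * q :=
    four_le_sq_mul_of_div_le hq hε (mod_cast ncard_deepEvent_le_sq B) (max_le_iff.1 hpr).2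
  have hcube : (q : ℝ) ^ 5 * (1 + d + ε * q) < N ^ 3 :=
    mul_add_lt_pow_three_of_max_le hq (mod_cast hd) hε (Nat.cast_nonneg N) hP hpr
  have hfloor : (⌊ε * q⌋₊ : ℝ) ≤ ε * q := Nat.floor_le (by positivity)
  refine correlatedAgreement_of_lt_sum_card_pow_three hB (P := P) (s := ⌊ε * q⌋₊) ?_ ?_
  · calc (1 : ℝ) ≤ ε * (ε * q) := by linarith
      _ ≤ ε * (⌊ε * q⌋₊ + 1) := by gcongr; exact (Nat.lt_floor_add_one _).le
  · have hlt : (q : ℝ) ^ 5 * (1 + d + ⌊ε * q⌋₊) < N ^ 3 := hcube.trans_le' (by gcongr)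
    exact_mod_cast hlt

end ReedSolomon

theorem stmt10 {F : Type*} [Field F] [Fintype F] (D : Finset F) (hD : D.Nonempty)
    (d : ℕ) (hd : 0 < d) (δ ε : ℝ) (hδ : 0 < δ) (hε : 0 < ε) (hε3 : ε < 1/3)
    (Lstar : ℝ)
    (hL : ∀ w : ↥D → F,
      (({v : ↥D → F |
          (∃ Q : Polynomial F, Q.degree < (d : ℕ) ∧ ∀ y : ↥D, v y = Q.eval (y : F)) ∧
          relDist w v < δ}).ncard : ℝ) ≤ Lstar)
    (u ustar : ↥D → F) (B : F → Polynomial F) (hB : ∀ z, (B z).degree ≤ 1)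
    (hpr : max (2 * Lstar * ((d / Fintype.card F : ℝ) + ε) ^ ((1:ℝ)/3))
        (4 / (ε ^ 2 * Fintype.card F))
      ≤ (({p : F × F | ∃ Q : Polynomial F, Q.degree < (d : ℕ) ∧
            Q.eval p.2 = (B p.2).eval p.1 ∧
            relDist (fun y => ustar y + p.1 * u y) (fun y : ↥D => Q.eval (y : F)) < δ}).ncard : ℝ)
          / (Fintype.card F : ℝ) ^ 2) :
    ∃ Qv Qvstar : Polynomial F, Qv.degree < (d : ℕ) ∧ Qvstar.degree < (d : ℕ) ∧
      (∃ C : Finset ↥D, ((1 - δ - ε) * D.card ≤ (C.card : ℝ)) ∧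
        (∀ y ∈ C, u y = Qv.eval (y : F)) ∧ (∀ y ∈ C, ustar y = Qvstar.eval (y : F))) ∧
      relDist u (fun y : ↥D => Qv.eval (y : F)) ≤ δ + ε ∧
      relDist ustar (fun y : ↥D => Qvstar.eval (y : F)) ≤ δ + ε := by
  have hagree : CorrelatedAgreement D d (δ + ε) u ustar := by
    obtain hDd | hdD := le_total #D d
    · exact correlatedAgreement_of_card_le hDd (by positivity) u ustar
    · refine correlatedAgreement_of_prob_deepEvent hd hε (fun x => ?_) hB hpr
      rw [← (injOn_rsEncode_rsList hdD _).ncard_image, rsEncode_image_rsList]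
      exact hL _
  obtain ⟨Q, Q', hQ, hQ', C, hC, hu, hu'⟩ := hagree
  have hD' : Nonempty D := hD.to_subtype
  have hC' : (1 - (δ + ε)) * Fintype.card D ≤ #C := by rwa [Fintype.card_coe]
  exact ⟨Q, Q', hQ, hQ', ⟨C, by rwa [sub_sub], hu, hu'⟩,
    relDist_le_of_forall_mem_eq hC' hu, relDist_le_of_forall_mem_eq hC' hu'⟩
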